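/- Let G be a finite simple graph on vertex set V equipped with a linear order, let w : V → ℝ≥0 be a weight function, let x ≥ 0 be a real number, and let S ⊆ V be a set such that every vertex v ∈ S has fewer than x neighbors u ∈ S with u preceding v in the order. Then there exists a subset I ⊆ S that is an independent set of G and satisfies ∑_{v∈I} w(v) ≥ (∑_{v∈S} w(v)) / ⌊x+1⌋. -/

import Mathlib

/-!
Colour the vertices of `S` greedily along the linear order: the least colour not yet used on an
earlier neighbour is at most the number of earlier neighbours, so `⌊x + 1⌋` colours suffice. The
colour classes are independent and partition `S`, so the heaviest of them carries at least the
average weight.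
-/

section GreedyColoring

variable {V : Type*}

/-- The vertices preceding `v` that are adjacent to it: the neighbours already coloured when a
greedy algorithm running along the order reaches `v`. -/
def earlierNeighbors [Preorder V] (G : SimpleGraph V) (v : V) : Set V :=
  {u | u < v ∧ G.Adj u v}

/-- The colour given to `v` by greedy colouring along a well-founded order: the least natural
number that is not the colour of an earlier neighbour. If every natural number is already taken,
the infimum is the junk value `0`. -/
noncomputable def greedyColor [Preorder V] [WellFoundedLT V] (G : SimpleGraph V) (v : V) : ℕ :=
  sInf {i | ∀ u, u < v → G.Adj u v → greedyColor G u ≠ i}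
termination_by wellFounded_lt.wrap v

theorem greedyColor_eq_sInf [Preorder V] [WellFoundedLT V] (G : SimpleGraph V) (v : V) :
    greedyColor G v = sInf (greedyColor G '' earlierNeighbors G v)ᶜ := by
  rw [greedyColor]
  congr 1
  ext i
  simp only [earlierNeighbors, Set.mem_ofPred_eq, Set.mem_compl_iff, Set.mem_image, not_exists,
    not_and, and_imp, ne_eq]

theorem greedyColor_le_encard_earlierNeighbors [Preorder V] [WellFoundedLT V]
    (G : SimpleGraph V) (v : V) :
    (greedyColor G v : ℕ∞) ≤ (earlierNeighbors G v).encard := by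
  have smaller_colors_used :
      Set.Iio (greedyColor G v) ⊆ greedyColor G '' earlierNeighbors G v := fun i hi => by
    rw [Set.mem_Iio, greedyColor_eq_sInf] at hi
    exact Set.notMem_compl_iff.1 (Nat.notMem_of_lt_sInf hi)
  calc (greedyColor G v : ℕ∞) = (Set.Iio (greedyColor G v)).encard := by
        rw [← Finset.coe_Iio, Set.encard_coe_eq_coe_finsetCard, Nat.card_Iio]
    _ ≤ (greedyColor G '' earlierNeighbors G v).encard := Set.encard_le_encard smaller_colors_used
    _ ≤ (earlierNeighbors G v).encard := Set.encard_image_le _ _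

theorem greedyColor_ne_of_mem_earlierNeighbors [Preorder V] [WellFoundedLT V]
    {G : SimpleGraph V} {u v : V} (hfin : (earlierNeighbors G v).Finite)
    (hu : u ∈ earlierNeighbors G v) : greedyColor G u ≠ greedyColor G v := by
  have unused : greedyColor G v ∉ greedyColor G '' earlierNeighbors G v := by
    rw [greedyColor_eq_sInf]
    exact Nat.sInf_mem (hfin.image _).infinite_compl.nonempty
  exact fun h => unused ⟨u, hu, h⟩

theorem colorable_of_encard_earlierNeighbors_lt [LinearOrder V] [WellFoundedLT V]
    {G : SimpleGraph V} {k : ℕ} (h : ∀ v, (earlierNeighbors G v).encard < k) :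
    G.Colorable k := by
  have hfin (v : V) : (earlierNeighbors G v).Finite := Set.finite_of_encard_le_coe (h v).le
  rw [SimpleGraph.colorable_iff_exists_bdd_nat_coloring]
  refine ⟨SimpleGraph.Coloring.mk (greedyColor G) fun {u v} huv => ?_, fun v => ?_⟩
  · rcases huv.ne.lt_or_gt with hlt | hgt
    · exact greedyColor_ne_of_mem_earlierNeighbors (hfin v) ⟨hlt, huv⟩
    · exact (greedyColor_ne_of_mem_earlierNeighbors (hfin u) ⟨hgt, huv.symm⟩).symm
  · exact_mod_cast (greedyColor_le_encard_earlierNeighbors G v).trans_lt (h v)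

theorem encard_earlierNeighbors_induce [Preorder V] [DecidableLT V] (G : SimpleGraph V)
    [DecidableRel G.Adj] {S : Finset V} {v : V} (hv : v ∈ S) :
    (earlierNeighbors (G.induce (S : Set V)) ⟨v, hv⟩).encard =
      (S.filter fun u => u < v ∧ G.Adj u v).card := by
  rw [← Set.encard_coe_eq_coe_finsetCard, ← Subtype.val_injective.encard_image]
  congr 1
  ext u
  simp [earlierNeighbors, and_left_comm]

end GreedyColoring

section HeavyColorClass

variable {V M : Type*} [AddCommMonoid M] [LinearOrder M] [IsOrderedAddMonoid M]
  {G : SimpleGraph V} {k : ℕ}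

theorem exists_isIndepSet_sum_le_nsmul_sum_of_colorable [Fintype V]
    (hG : G.Colorable k) (w : V → M) :
    ∃ I : Finset V, G.IsIndepSet I ∧ ∑ v, w v ≤ k • ∑ v ∈ I, w v := by
  obtain ⟨C⟩ := hG
  rcases isEmpty_or_nonempty V with _ | ⟨⟨v₀⟩⟩
  · exact ⟨∅, by simp, by simp⟩
  have : Nonempty (Fin k) := ⟨C v₀⟩
  obtain ⟨i, heaviest⟩ := Finite.exists_max fun j => ∑ v with C v = j, w v
  refine ⟨Finset.univ.filter (C · = i), ?_, ?_⟩
  · rw [Finset.coe_filter_univ]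
    exact C.isIndepSet_colorClass i
  · calc ∑ v, w v = ∑ j, ∑ v with C v = j, w v := (Finset.sum_fiberwise _ C w).symm
      _ ≤ (Finset.univ : Finset (Fin k)).card • ∑ v with C v = i, w v :=
          Finset.sum_le_card_nsmul _ _ _ fun j _ => heaviest j
      _ = k • ∑ v with C v = i, w v := by rw [Finset.card_fin]

theorem exists_subset_isIndepSet_sum_le_nsmul_sum_of_colorable_induce {S : Finset V}
    (hS : (G.induce (S : Set V)).Colorable k) (w : V → M) :
    ∃ I ⊆ S, G.IsIndepSet I ∧ ∑ v ∈ S, w v ≤ k • ∑ v ∈ I, w v := by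
  obtain ⟨I, hI, heavy⟩ :=
    exists_isIndepSet_sum_le_nsmul_sum_of_colorable hS fun v => w v
  refine ⟨I.map (.subtype _), Finset.map_subtype_subset I, ?_, ?_⟩
  · rw [Finset.coe_map]
    exact Subtype.val_injective.injOn.pairwise_image.2 hI
  · rw [Finset.sum_map, ← Finset.sum_coe_sort S w]
    exact heavy

end HeavyColorClass

theorem exists_heavy_independent_subset_general {V K : Type*} [LinearOrder V]
    [Field K] [LinearOrder K] [IsStrictOrderedRing K] [FloorSemiring K]
    (G : SimpleGraph V) [DecidableRel G.Adj] (w : V → K) (x : K) (hx : 0 ≤ x) (S : Finset V)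
    (hS : ∀ v ∈ S, ((S.filter fun u => u < v ∧ G.Adj u v).card : K) ≤ x) :
    ∃ I ⊆ S, (∀ u ∈ I, ∀ v ∈ I, ¬ G.Adj u v) ∧
      (∑ v ∈ S, w v) / (⌊x + 1⌋₊ : K) ≤ ∑ v ∈ I, w v := by
  have hfloor : ⌊x + 1⌋₊ = ⌊x⌋₊ + 1 := Nat.floor_add_one hx
  have colorable : (G.induce (S : Set V)).Colorable ⌊x + 1⌋₊ := by
    refine colorable_of_encard_earlierNeighbors_lt fun ⟨v, hv⟩ => ?_
    rw [encard_earlierNeighbors_induce, Nat.cast_lt, hfloor, Nat.lt_succ_iff]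
    exact Nat.le_floor (hS v hv)
  obtain ⟨I, hIS, hI, heavy⟩ :=
    exists_subset_isIndepSet_sum_le_nsmul_sum_of_colorable_induce colorable w
  refine ⟨I, hIS, fun u hu v hv huv => hI hu hv huv.ne huv, ?_⟩
  have hpos : (0 : K) < ⌊x + 1⌋₊ := by rw [hfloor]; positivity
  rwa [div_le_iff₀' hpos, ← nsmul_eq_mul]

theorem exists_heavy_independent_subset {V : Type*} [Fintype V] [LinearOrder V]
    (G : SimpleGraph V) [DecidableRel G.Adj]
    (w : V → ℝ) (hw0 : ∀ v, 0 ≤ w v)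
    (x : ℝ) (hx : 0 ≤ x) (S : Finset V)
    (hS : ∀ v ∈ S, ((S.filter fun u => u < v ∧ G.Adj u v).card : ℝ) < x) :
    ∃ I ⊆ S, (∀ u ∈ I, ∀ v ∈ I, ¬ G.Adj u v) ∧
      (∑ v ∈ S, w v) / (⌊x + 1⌋₊ : ℝ) ≤ ∑ v ∈ I, w v :=
  exists_heavy_independent_subset_general G w x hx S fun v hv => (hS v hv).le
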